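/- Let g(x) = (λ^{ν−1/2}/Γ(2ν−1)^{1/2}) x^{ν−1} e^{−λx/2} with ν > 1/2, λ > 0, and let h > 0. Then ∫₀^∞ g(t+h) g(t) dt = (1/(2^{ν−3/2} Γ(ν−1/2))) · (λh/2)^{ν−1/2} · K_{ν−1/2}(λh/2). -/

import Mathlib

open MeasureTheory Set Real

/-- The modified Bessel function of the third kind (Basset's integral
representation): `K_μ(x) = ∫₀^∞ exp(-x cosh t) cosh(μ t) dt` for `x > 0`. -/
noncomputable def besselK (μ x : ℝ) : ℝ :=
  ∫ t in Ioi (0:ℝ), Real.exp (-x * Real.cosh t) * Real.cosh (μ * t)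

/-!
Multiply `2 K_μ(x) = ∫_ℝ exp (μ t - x cosh t) dt` by `Γ(μ + 1/2)`, and for each `t` write the
Gamma factor as an integral over `p > 1` by substituting `x e⁻ᵗ (p² - 1) / 2` for the variable of
Euler's integral. The exponents then combine so that, after exchanging the integrals, the inner
`t`-integral only involves the elementary function `K_{1/2}`. What remains is
`K_μ(x) = √π (x / 2)^μ / Γ(μ + 1/2) ∫₁^∞ exp (-x p) (p² - 1)^(μ - 1/2) dp`, which the affine
substitution `p = 1 + 2 t / h` identifies with the autocovariance of the gamma kernel, up to
constants that Legendre's duplication formula matches.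
-/

lemma one_add_sq_div_two_le_cosh (t : ℝ) : 1 + t ^ 2 / 2 ≤ cosh t := by
  have hsinh : |t / 2| ≤ |sinh (t / 2)| := by
    rw [abs_sinh]
    exact self_le_sinh_iff.2 (abs_nonneg _)
  have hcosh : cosh t = 1 + 2 * sinh (t / 2) ^ 2 := by
    have := cosh_two_mul (t / 2)
    rw [mul_div_cancel₀ t two_ne_zero, cosh_sq] at this
    linarith
  linarith [sq_le_sq.2 hsinh]

lemma integral_comp_add_right_Ioi {E : Type*} [NormedAddCommGroup E] [NormedSpace ℝ E]
    (f : ℝ → E) (a c : ℝ) : ∫ x in Ioi a, f (x + c) = ∫ x in Ioi (a + c), f x := by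
  simpa using (measurePreserving_add_right volume c).setIntegral_preimage_emb
    (measurableEmbedding_addRight c) f (Ioi (a + c))

lemma image_sq_sub_one_Ioi : (fun p : ℝ ↦ p ^ 2 - 1) '' Ioi 1 = Ioi 0 := by
  ext y
  simp only [mem_image, mem_Ioi]
  constructor
  · rintro ⟨p, hp, rfl⟩
    nlinarith
  · intro hy
    exact ⟨√(y + 1), lt_sqrt_of_sq_lt (by linarith), by rw [sq_sqrt (by linarith)]; ring⟩

lemma integral_Ioi_one_sq_sub_one_rpow_mul_exp_neg_mul {s k : ℝ} (hs : 0 < s) (hk : 0 < k) :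
    ∫ p in Ioi (1 : ℝ), 2 * p * ((p ^ 2 - 1) ^ (s - 1) * exp (-(k * (p ^ 2 - 1)))) =
      (1 / k) ^ s * Gamma s := by
  have hderiv (p : ℝ) (_ : p ∈ Ioi (1 : ℝ)) :
      HasDerivWithinAt (fun p ↦ p ^ 2 - 1) (2 * p) (Ioi 1) p := by
    simpa using ((hasDerivAt_pow 2 p).sub_const 1).hasDerivWithinAt
  have hmono : MonotoneOn (fun p : ℝ ↦ p ^ 2 - 1) (Ioi 1) := fun p hp q _ hpq ↦
    sub_le_sub_right (pow_le_pow_left₀ (zero_le_one.trans (le_of_lt hp)) hpq 2) 1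
  rw [← integral_rpow_mul_exp_neg_mul_Ioi hs hk, ← image_sq_sub_one_Ioi,
    integral_image_eq_integral_deriv_smul_of_monotoneOn measurableSet_Ioi hderiv hmono]
  rfl

section BesselK

variable {μ x : ℝ}

lemma besselK_neg (μ x : ℝ) : besselK (-μ) x = besselK μ x := by
  simp only [besselK, neg_mul, cosh_neg]

lemma integrable_exp_mul_exp_neg_mul_cosh (μ : ℝ) (hx : 0 < x) :
    Integrable fun t ↦ exp (μ * t) * exp (-x * cosh t) := by
  have gaussian : Integrable fun t ↦ exp (μ ^ 2 / (2 * x)) * exp (-(x / 2) * (t - μ / x) ^ 2) :=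
    ((integrable_exp_neg_mul_sq (half_pos hx)).comp_sub_right (μ / x)).const_mul _
  refine gaussian.mono' (by fun_prop) (.of_forall fun t ↦ ?_)
  have complete_square :
      μ ^ 2 / (2 * x) + -(x / 2) * (t - μ / x) ^ 2 = μ * t - x * (t ^ 2 / 2) := by
    field_simp
    ring
  rw [norm_of_nonneg (by positivity), ← exp_add, ← exp_add, complete_square, exp_le_exp]
  nlinarith [one_add_sq_div_two_le_cosh t]

lemma integral_exp_mul_exp_neg_mul_cosh (μ : ℝ) (hx : 0 < x) :
    ∫ t, exp (μ * t) * exp (-x * cosh t) = 2 * besselK μ x := by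
  set f : ℝ → ℝ := fun t ↦ exp (μ * t) * exp (-x * cosh t)
  have hf : Integrable f := integrable_exp_mul_exp_neg_mul_cosh μ hx
  have even_part (t : ℝ) : f t + f (-t) = 2 * (exp (-x * cosh |t|) * cosh (μ * |t|)) := by
    have hμ : cosh (μ * |t|) = cosh (μ * t) := by
      rw [← cosh_abs, abs_mul, abs_abs, ← abs_mul, cosh_abs]
    simp only [f]
    rw [cosh_abs, hμ, cosh_neg, cosh_eq (μ * t), mul_neg]
    ring
  have symmetrized : 2 * ∫ t, f t = 2 * (2 * besselK μ x) := calc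
    2 * ∫ t, f t = (∫ t, f t) + ∫ t, f (-t) := by rw [integral_neg_eq_self, two_mul]
    _ = ∫ t, 2 * (exp (-x * cosh |t|) * cosh (μ * |t|)) := by
      rw [← integral_add hf hf.comp_neg]
      exact integral_congr_ae (.of_forall even_part)
    _ = 2 * (2 * besselK μ x) := by
      rw [integral_const_mul,
        integral_comp_abs (f := fun t ↦ exp (-x * cosh t) * cosh (μ * t)), besselK]
  exact mul_left_cancel₀ two_ne_zero symmetrized

lemma integral_exp_mul_exp_neg_add_exp_neg {a b : ℝ} (μ : ℝ) (ha : 0 < a) (hb : 0 < b) :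
    ∫ t, exp (μ * t) * exp (-(a * exp t + b * exp (-t))) =
      2 * (b / a) ^ (μ / 2) * besselK μ (2 * √(a * b)) := by
  set c := √(b / a)
  have hc : 0 < c := by positivity
  have ha_c : a * c = √(a * b) := by
    rw [← mul_self_sqrt ha.le, mul_assoc, ← sqrt_mul ha.le, mul_self_sqrt ha.le,
      mul_div_cancel₀ b ha.ne', sqrt_mul ha.le]
  have hb_c : b * c⁻¹ = √(a * b) := by
    rw [← ha_c, ← div_eq_mul_inv, div_eq_iff hc.ne', mul_assoc, mul_self_sqrt (by positivity),
      mul_div_cancel₀ b ha.ne']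
  have shifted (t : ℝ) :
      exp (μ * (t + log c)) * exp (-(a * exp (t + log c) + b * exp (-(t + log c)))) =
        (b / a) ^ (μ / 2) * (exp (μ * t) * exp (-(2 * √(a * b)) * cosh t)) := by
    have hμ : exp (μ * (t + log c)) = (b / a) ^ (μ / 2) * exp (μ * t) := by
      rw [rpow_div_two_eq_sqrt μ (by positivity), rpow_def_of_pos hc, ← exp_add]
      ring_nf
    have hcosh : a * exp (t + log c) + b * exp (-(t + log c)) = 2 * √(a * b) * cosh t := by
      rw [neg_add, exp_add, exp_add, exp_neg (log c), exp_log hc, cosh_eq]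
      linear_combination exp t * ha_c + exp (-t) * hb_c
    rw [hμ, hcosh, neg_mul, mul_assoc]
  rw [← integral_add_right_eq_self _ (log c), funext shifted, integral_const_mul,
    integral_exp_mul_exp_neg_mul_cosh μ (by positivity)]
  ring

lemma besselK_one_half (x : ℝ) : besselK (1 / 2) x = √(π / (2 * x)) * exp (-x) := by
  have range_sinh : sinh '' Ioi 0 = Ioi 0 := by
    simpa using sinhOrderIso.image_Ioi 0
  have gaussian_form (s : ℝ) : exp (-x * cosh (2 * s)) * cosh (1 / 2 * (2 * s)) =
      exp (-x) * (cosh s • exp (-(2 * x) * sinh s ^ 2)) := by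
    rw [show 1 / 2 * (2 * s) = s by ring, cosh_two_mul, cosh_sq, smul_eq_mul, mul_left_comm,
      ← exp_add]
    ring_nf
  calc besselK (1 / 2) x
      = 2 * ∫ s in Ioi 0, exp (-x * cosh (2 * s)) * cosh (1 / 2 * (2 * s)) := by
        rw [besselK, integral_comp_mul_left_Ioi
          (fun t ↦ exp (-x * cosh t) * cosh (1 / 2 * t)) 0 two_pos]
        simp
    _ = 2 * (exp (-x) * ∫ u in Ioi 0, exp (-(2 * x) * u ^ 2)) := by
        simp only [gaussian_form, integral_const_mul]
        rw [← integral_image_eq_integral_deriv_smul_of_monotoneOn measurableSet_Ioi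
          (fun s _ ↦ (hasDerivAt_sinh s).hasDerivWithinAt) (sinh_strictMono.monotone.monotoneOn _)
          (fun u ↦ exp (-(2 * x) * u ^ 2)), range_sinh]
    _ = √(π / (2 * x)) * exp (-x) := by
        rw [integral_gaussian_Ioi]
        ring

lemma integral_exp_neg_half_mul_exp_neg_add_exp_neg {a b : ℝ} (ha : 0 < a) (hb : 0 < b) :
    ∫ t, exp (-(1 / 2) * t) * exp (-(a * exp t + b * exp (-t))) =
      √(π / b) * exp (-(2 * √(a * b))) := by
  have quarter_powers : 2 * (b / a) ^ (-(1 / 2) / 2 : ℝ) * √(π / (2 * (2 * √(a * b)))) =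
      √(π / b) := by
    rw [← sq_eq_sq₀ (by positivity) (by positivity), mul_pow, mul_pow, sq_sqrt (by positivity),
      sq_sqrt (by positivity), ← rpow_mul_natCast (by positivity),
      show (-(1 / 2) / 2 * (2 : ℕ) : ℝ) = -(1 / 2) by norm_num, rpow_neg (by positivity),
      ← sqrt_eq_rpow, sqrt_div hb.le, sqrt_mul ha.le]
    field_simp
    rw [sq_sqrt hb.le]
  rw [integral_exp_mul_exp_neg_add_exp_neg _ ha hb, besselK_neg, besselK_one_half, ← mul_assoc,
    quarter_powers]

/-- The joint integrand in `(t, p)` whose two iterated integrals give Basset's representation of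
`K_μ(x)` and its representation as an integral over `p > 1`, each up to a constant factor. -/
noncomputable def besselKernel (μ x t p : ℝ) : ℝ :=
  exp (-(1 / 2) * t) * exp (-(x / 2 * exp t + x * p ^ 2 / 2 * exp (-t))) *
    (2 * p * (p ^ 2 - 1) ^ (μ - 1 / 2))

lemma besselKernel_nonneg (μ x t : ℝ) {p : ℝ} (hp : 1 < p) : 0 ≤ besselKernel μ x t p := by
  have : 0 ≤ p ^ 2 - 1 := by nlinarith
  unfold besselKernel
  positivity

lemma setIntegral_besselKernel (hμ : -(1 / 2) < μ) (hx : 0 < x) (t : ℝ) :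
    ∫ p in Ioi 1, besselKernel μ x t p =
      (2 / x) ^ (μ + 1 / 2) * Gamma (μ + 1 / 2) * (exp (μ * t) * exp (-x * cosh t)) := by
  set k := x / 2 * exp (-t)
  have gamma_form (p : ℝ) : besselKernel μ x t p =
      exp (-(1 / 2) * t) * exp (-x * cosh t) *
        (2 * p * ((p ^ 2 - 1) ^ (μ + 1 / 2 - 1) * exp (-(k * (p ^ 2 - 1))))) := by
    have hexp : exp (-(x / 2 * exp t + x * p ^ 2 / 2 * exp (-t))) =
        exp (-x * cosh t) * exp (-(k * (p ^ 2 - 1))) := by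
      rw [← exp_add, cosh_eq]
      simp only [k]
      ring_nf
    rw [besselKernel, hexp, show μ + 1 / 2 - 1 = μ - 1 / 2 by ring]
    ring
  have hk : (1 / k) ^ (μ + 1 / 2) = (2 / x) ^ (μ + 1 / 2) * exp ((μ + 1 / 2) * t) := by
    rw [one_div, mul_inv, inv_div, exp_neg, inv_inv, mul_rpow (by positivity) (by positivity),
      ← exp_mul, mul_comm t]
  have hμt : exp (μ * t) = exp (-(1 / 2) * t) * exp ((μ + 1 / 2) * t) := by
    rw [← exp_add]
    ring_nf
  simp only [gamma_form, integral_const_mul]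
  rw [integral_Ioi_one_sq_sub_one_rpow_mul_exp_neg_mul (by linarith) (by positivity), hk, hμt]
  ring

lemma integral_besselKernel (μ : ℝ) (hx : 0 < x) {p : ℝ} (hp : 0 < p) :
    ∫ t, besselKernel μ x t p =
      2 * √(2 * π / x) * (exp (-x * p) * (p ^ 2 - 1) ^ (μ - 1 / 2)) := by
  have hdecay : 2 * √(x / 2 * (x * p ^ 2 / 2)) = x * p := by
    rw [show x / 2 * (x * p ^ 2 / 2) = (x * p / 2) ^ 2 by ring, sqrt_sq (by positivity)]
    ring
  have hscale : √(π / (x * p ^ 2 / 2)) = √(2 * π / x) / p := by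
    rw [show π / (x * p ^ 2 / 2) = 2 * π / x / p ^ 2 by field_simp, sqrt_div' _ (by positivity),
      sqrt_sq hp.le]
  simp only [besselKernel, integral_mul_const]
  rw [integral_exp_neg_half_mul_exp_neg_add_exp_neg (by positivity) (by positivity), hdecay, hscale,
    neg_mul]
  field_simp

lemma integrable_besselKernel (hμ : -(1 / 2) < μ) (hx : 0 < x) :
    Integrable (Function.uncurry (besselKernel μ x)) (volume.prod (volume.restrict (Ioi 1))) := by
  have hmeas : Measurable (Function.uncurry (besselKernel μ x)) := by
    unfold besselKernel Function.uncurry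
    fun_prop
  refine (integrable_prod_iff hmeas.aestronglyMeasurable).2 ⟨.of_forall fun t ↦ ?_, ?_⟩
  · have hΓ : 0 < Gamma (μ + 1 / 2) := Gamma_pos_of_pos (by linarith)
    refine .of_integral_ne_zero ?_
    simp only [Function.uncurry_apply_pair]
    rw [setIntegral_besselKernel hμ hx]
    positivity
  · have hnorm (t : ℝ) : ∫ p in Ioi 1, ‖besselKernel μ x t p‖ =
        (2 / x) ^ (μ + 1 / 2) * Gamma (μ + 1 / 2) * (exp (μ * t) * exp (-x * cosh t)) := by
      rw [← setIntegral_besselKernel hμ hx]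
      exact setIntegral_congr_fun measurableSet_Ioi fun p hp ↦
        norm_of_nonneg (besselKernel_nonneg μ x t hp)
    simp only [Function.uncurry_apply_pair, hnorm]
    exact (integrable_exp_mul_exp_neg_mul_cosh μ hx).const_mul _

theorem besselK_eq_integral_Ioi_one (hμ : -(1 / 2) < μ) (hx : 0 < x) :
    besselK μ x = √π * (x / 2) ^ μ / Gamma (μ + 1 / 2) *
      ∫ p in Ioi 1, exp (-x * p) * (p ^ 2 - 1) ^ (μ - 1 / 2) := by
  have hΓ : 0 < Gamma (μ + 1 / 2) := Gamma_pos_of_pos (by linarith)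
  have iterated : (2 / x) ^ (μ + 1 / 2) * Gamma (μ + 1 / 2) * (2 * besselK μ x) =
      2 * √(2 * π / x) * ∫ p in Ioi 1, exp (-x * p) * (p ^ 2 - 1) ^ (μ - 1 / 2) := calc
    _ = ∫ t, ∫ p in Ioi 1, besselKernel μ x t p := by
      simp only [setIntegral_besselKernel hμ hx, integral_const_mul,
        integral_exp_mul_exp_neg_mul_cosh μ hx]
    _ = ∫ p in Ioi 1, ∫ t, besselKernel μ x t p :=
      integral_integral_swap (integrable_besselKernel hμ hx)
    _ = _ := by
      rw [← integral_const_mul]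
      exact setIntegral_congr_fun measurableSet_Ioi fun p hp ↦
        integral_besselKernel μ hx (zero_lt_one.trans hp)
  have hpow : (2 / x) ^ (μ + 1 / 2) = √(2 / x) / (x / 2) ^ μ := by
    rw [rpow_add (by positivity), ← sqrt_eq_rpow, ← inv_div x 2, inv_rpow (by positivity)]
    field_simp
  have hsqrt : √(2 * π / x) = √(2 / x) * √π := by
    rw [← sqrt_mul (by positivity), div_mul_eq_mul_div]
  rw [hpow, hsqrt] at iterated
  rw [div_mul_eq_mul_div, eq_div_iff hΓ.ne']
  have : 0 < √(2 / x) := by positivity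
  field_simp at iterated ⊢
  linarith

end BesselK

section GammaKernel

variable {ν lam h : ℝ}

lemma integral_mul_add_rpow_mul_exp_neg_mul_eq_integral_Ioi_one (ν lam : ℝ) (hh : 0 < h) :
    ∫ t in Ioi 0, (t * (t + h)) ^ (ν - 1) * exp (-(lam * t)) =
      h / 2 * ((h / 2) ^ 2) ^ (ν - 1) * exp (lam * h / 2) *
        ∫ p in Ioi 1, exp (-(lam * h / 2) * p) * (p ^ 2 - 1) ^ (ν - 1) := by
  have rescaled (u : ℝ) (hu : u ∈ Ioi 0) :
      (h / 2 * u * (h / 2 * u + h)) ^ (ν - 1) * exp (-(lam * (h / 2 * u))) =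
        ((h / 2) ^ 2) ^ (ν - 1) * exp (lam * h / 2) *
          (exp (-(lam * h / 2) * (u + 1)) * ((u + 1) ^ 2 - 1) ^ (ν - 1)) := by
    have hu : 0 < u := hu
    have hexp : exp (-(lam * (h / 2 * u))) =
        exp (lam * h / 2) * exp (-(lam * h / 2) * (u + 1)) := by
      rw [← exp_add]
      ring_nf
    rw [show h / 2 * u * (h / 2 * u + h) = (h / 2) ^ 2 * ((u + 1) ^ 2 - 1) by ring,
      mul_rpow (by positivity) (by nlinarith), hexp]
    ring
  have hscale := integral_comp_mul_left_Ioi'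
    (fun t ↦ (t * (t + h)) ^ (ν - 1) * exp (-(lam * t))) 0 (half_pos hh)
  rw [mul_zero] at hscale
  rw [← hscale, setIntegral_congr_fun measurableSet_Ioi rescaled, integral_const_mul,
    integral_comp_add_right_Ioi (fun p ↦ exp (-(lam * h / 2) * p) * (p ^ 2 - 1) ^ (ν - 1)),
    zero_add, smul_eq_mul]
  ring

lemma integral_mul_add_rpow_mul_exp_neg_mul (hν : 0 < ν) (hlam : 0 < lam) (hh : 0 < h) :
    ∫ t in Ioi 0, (t * (t + h)) ^ (ν - 1) * exp (-(lam * t)) =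
      (√π)⁻¹ * (h / lam) ^ (ν - 1 / 2) * exp (lam * h / 2) * Gamma ν *
        besselK (ν - 1 / 2) (lam * h / 2) := by
  have hpow : (h / lam) ^ (ν - 1 / 2) * (lam * h / 2 / 2) ^ (ν - 1 / 2) =
      h / 2 * ((h / 2) ^ 2) ^ (ν - 1) := by
    rw [← mul_rpow (by positivity) (by positivity),
      show h / lam * (lam * h / 2 / 2) = (h / 2) ^ 2 by field_simp,
      show ν - 1 / 2 = 1 / 2 + (ν - 1) by ring, rpow_add (by positivity), ← sqrt_eq_rpow,
      sqrt_sq (by positivity)]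
  have hΓ : Gamma ν ≠ 0 := (Gamma_pos_of_pos hν).ne'
  rw [integral_mul_add_rpow_mul_exp_neg_mul_eq_integral_Ioi_one ν lam hh, ← hpow,
    besselK_eq_integral_Ioi_one (by linarith) (by positivity), sub_add_cancel,
    show ν - 1 / 2 - 1 / 2 = ν - 1 by ring]
  field_simp [hΓ]

/-- The gamma kernel `g` with shape `ν` and rate `lam`, normalised to have unit `L²` norm on
`(0, ∞)` when `1 / 2 < ν` and `0 < lam`. -/
noncomputable def gammaKernel (ν lam x : ℝ) : ℝ :=
  lam ^ (ν - 1 / 2) / Gamma (2 * ν - 1) ^ ((1 : ℝ) / 2) * x ^ (ν - 1) * exp (-lam * x / 2)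

lemma gammaKernel_add_mul_gammaKernel (hν : 1 / 2 ≤ ν) (hh : 0 ≤ h) {t : ℝ} (ht : 0 ≤ t) :
    gammaKernel ν lam (t + h) * gammaKernel ν lam t =
      (lam ^ (ν - 1 / 2)) ^ 2 / Gamma (2 * ν - 1) * exp (-(lam * h / 2)) *
        ((t * (t + h)) ^ (ν - 1) * exp (-(lam * t))) := by
  have hΓ : Gamma (2 * ν - 1) = (Gamma (2 * ν - 1) ^ ((1 : ℝ) / 2)) ^ 2 := by
    rw [← sqrt_eq_rpow, sq_sqrt (Gamma_nonneg_of_nonneg (by linarith))]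
  have hexp : exp (-lam * (t + h) / 2) * exp (-lam * t / 2) =
      exp (-(lam * h / 2)) * exp (-(lam * t)) := by
    rw [← exp_add, ← exp_add]
    ring_nf
  rw [hΓ, mul_rpow ht (by positivity), gammaKernel, gammaKernel]
  linear_combination (lam ^ (ν - 1 / 2)) ^ 2 / (Gamma (2 * ν - 1) ^ ((1 : ℝ) / 2)) ^ 2 *
    (t + h) ^ (ν - 1) * t ^ (ν - 1) * hexp

lemma Gamma_two_mul_sub_one (ν : ℝ) :
    Gamma (2 * ν - 1) = 2 ^ (2 * ν - 2) * (√π)⁻¹ * Gamma (ν - 1 / 2) * Gamma ν := by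
  have legendre := Gamma_mul_Gamma_add_half (ν - 1 / 2)
  rw [sub_add_cancel, show 2 * (ν - 1 / 2) = 2 * ν - 1 by ring,
    show 1 - (2 * ν - 1) = -(2 * ν - 2) by ring, rpow_neg zero_le_two] at legendre
  rw [mul_assoc _ (Gamma _), legendre]
  field_simp

end GammaKernel

theorem gamma_kernel_autocovariance (ν lam h : ℝ) (hν : 1 / 2 < ν) (hlam : 0 < lam)
    (hh : 0 < h) :
    let g : ℝ → ℝ := fun x =>
      lam ^ (ν - 1 / 2) / (Real.Gamma (2 * ν - 1)) ^ ((1:ℝ) / 2) *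
        x ^ (ν - 1) * Real.exp (-lam * x / 2)
    ∫ t in Ioi (0:ℝ), g (t + h) * g t
      = 1 / ((2:ℝ) ^ (ν - 3 / 2) * Real.Gamma (ν - 1 / 2)) *
          (lam * h / 2) ^ (ν - 1 / 2) * besselK (ν - 1 / 2) (lam * h / 2) := by
  change ∫ t in Ioi 0, gammaKernel ν lam (t + h) * gammaKernel ν lam t = _
  have hΓ : Gamma (ν - 1 / 2) ≠ 0 := (Gamma_pos_of_pos (by linarith)).ne'
  have hΓν : Gamma ν ≠ 0 := (Gamma_pos_of_pos (by linarith)).ne'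
  have two_pow : (2 : ℝ) ^ (2 * ν - 2) = 2 ^ (ν - 3 / 2) * 2 ^ (ν - 1 / 2) := by
    rw [← rpow_add two_pos]
    ring_nf
  rw [setIntegral_congr_fun measurableSet_Ioi fun t ht ↦
      gammaKernel_add_mul_gammaKernel hν.le hh.le (le_of_lt ht), integral_const_mul,
    integral_mul_add_rpow_mul_exp_neg_mul (by linarith) hlam hh, Gamma_two_mul_sub_one, two_pow,
    div_rpow hh.le hlam.le, div_rpow (by positivity) zero_le_two, mul_rpow hlam.le hh.le, exp_neg]
  field_simp [hΓ, hΓν]
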